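/- arXiv:1904.11736 — 5 statements merged into one kernel-verified Lean document; each statement's English description precedes it below -/
import Mathlib

section
/- Let S, S' be continuous semilattices with bottom elements and let i : S → S'^∧ be an order isomorphism. Then the map P : S × S' → {0,1} defined by P(x,y) = 1 iff y ∈ i(x) is a separating compatibility, and it is the unique separating compatibility P with i(x) = {y ∈ S' : P(x,y) = 1} for all x ∈ S. -/
/-- A dcpo: every nonempty directed subset has a least upper bound. -/
def IsDcpo (α : Type*) [PartialOrder α] : Prop :=
  ∀ D : Set α, D.Nonempty → DirectedOn (· ≤ ·) D → ∃ a : α, IsLUB D a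

/-- Scott closed: a lower set closed under suprema of its (nonempty) directed subsets. -/
def ScottClosed {α : Type*} [PartialOrder α] (A : Set α) : Prop :=
  IsLowerSet A ∧
    ∀ D : Set α, D ⊆ A → D.Nonempty → DirectedOn (· ≤ ·) D → ∀ a : α, IsLUB D a → a ∈ A

/-- Scott closure: the least Scott closed set containing `A`. -/
def scottClosure {α : Type*} [PartialOrder α] (A : Set α) : Set α :=
  ⋂₀ {C : Set α | ScottClosed C ∧ A ⊆ C}

/-- `x` is way below `y`. -/
def WayBelow {α : Type*} [PartialOrder α] (x y : α) : Prop :=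
  ∀ D : Set α, D.Nonempty → DirectedOn (· ≤ ·) D → ∀ a : α, IsLUB D a → y ≤ a → ∃ d ∈ D, x ≤ d

/-- A continuous (meet-)semilattice with zero: a dcpo meet-semilattice with bottom in which
every element is the directed supremum of the elements way below it. -/
def IsContinuousSemilattice (α : Type*) [SemilatticeInf α] [OrderBot α] : Prop :=
  IsDcpo α ∧
    ∀ y : α, DirectedOn (· ≤ ·) {x : α | WayBelow x y} ∧ IsLUB {x : α | WayBelow x y} y

/-- A compatibility `P : S × S' → {0,1}` (encoded with `Prop` as the two-element lattice,
`P x y` meaning `P(x,y) = 1`): it preserves binary meets in each variable separately,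
sends pairs containing a bottom element to `0`, and is Scott continuous (preserves
suprema of nonempty directed subsets of the product). -/
def IsCompatibility {S S' : Type*} [SemilatticeInf S] [OrderBot S]
    [SemilatticeInf S'] [OrderBot S'] (P : S → S' → Prop) : Prop :=
  (∀ x₁ x₂ y, P (x₁ ⊓ x₂) y ↔ P x₁ y ∧ P x₂ y) ∧
  (∀ x y₁ y₂, P x (y₁ ⊓ y₂) ↔ P x y₁ ∧ P x y₂) ∧
  (∀ y, ¬ P ⊥ y) ∧ (∀ x, ¬ P x ⊥) ∧
  (∀ D : Set (S × S'), D.Nonempty → DirectedOn (· ≤ ·) D → ∀ a : S × S', IsLUB D a →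
    (P a.1 a.2 ↔ ∃ p ∈ D, P p.1 p.2))

/-- A separating compatibility. -/
def IsSeparatingCompatibility {S S' : Type*} [SemilatticeInf S] [OrderBot S]
    [SemilatticeInf S'] [OrderBot S'] (P : S → S' → Prop) : Prop :=
  IsCompatibility P ∧
  (∀ x₁ x₂ : S, (∀ y, P x₁ y ↔ P x₂ y) → x₁ = x₂) ∧
  (∀ y₁ y₂ : S', (∀ x, P x y₁ ↔ P x y₂) → y₁ = y₂)

/-- Transversal of `A ⊆ S` w.r.t. a compatibility `P : S × S' → {0,1}`:
all `y ∈ S'` with `P(x,y) = 0` for every `x ∈ A`. -/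
def transversal {S S' : Type*} (P : S → S' → Prop) (A : Set S) : Set S' :=
  {y : S' | ∀ x ∈ A, ¬ P x y}

/-- A (crisp) ambiguous representation of `S₁` in `S₂`. -/
def AmbRep {S₁ S₂ : Type*} [PartialOrder S₁] [PartialOrder S₂] (R : Set (S₁ × S₂)) : Prop :=
  (∀ x : S₁, ({y : S₂ | (x, y) ∈ R}).Nonempty ∧ ScottClosed {y : S₂ | (x, y) ∈ R}) ∧
  (∀ y : S₂, IsUpperSet {x : S₁ | (x, y) ∈ R})

/-- The pseudo-inverse of a relation `R ⊆ S₁ × S₂` w.r.t. compatibilities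
`P₁ : S₁ × T₁ → {0,1}` and `P₂ : S₂ × T₂ → {0,1}`. -/
def psInv {S₁ S₂ T₁ T₂ : Type*} (P₁ : S₁ → T₁ → Prop) (P₂ : S₂ → T₂ → Prop)
    (R : Set (S₁ × S₂)) : Set (T₂ × T₁) :=
  {p : T₂ × T₁ | ∀ x : S₁, P₁ x p.2 → ∃ y : S₂, (x, y) ∈ R ∧ P₂ y p.1}

/-- Composition `R ; Q` of ambiguous representations. -/
def ambComp {S₁ S₂ S₃ : Type*} [PartialOrder S₃]
    (R : Set (S₁ × S₂)) (Q : Set (S₂ × S₃)) : Set (S₁ × S₃) :=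
  {p : S₁ × S₃ | ∀ z' : S₃, WayBelow z' p.2 → ∃ y : S₂, (p.1, y) ∈ R ∧ (y, z') ∈ Q}

/-- Pseudo-invertibility condition (c). -/
def PseudoInvertible {S₁ S₂ : Type*} [PartialOrder S₁] [PartialOrder S₂]
    (R : Set (S₁ × S₂)) : Prop :=
  ∀ x y, (x, y) ∈ R → ∀ y', WayBelow y' y → ∃ x', WayBelow x' x ∧ (x', y') ∈ R

/-- An `L`-fuzzy ambiguous representation of `S₁` in `S₂`. -/
def LAmbRep {S₁ S₂ L : Type*} [PartialOrder S₁] [PartialOrder S₂] [PartialOrder L]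
    (R : Set (S₁ × S₂ × L)) : Prop :=
  (∀ (y : S₂) (α : L), IsUpperSet {x : S₁ | (x, y, α) ∈ R}) ∧
  (∀ (x : S₁) (α : L),
    ({y : S₂ | (x, y, α) ∈ R}).Nonempty ∧ ScottClosed {y : S₂ | (x, y, α) ∈ R}) ∧
  (∀ (x : S₁) (y : S₂), ({α : L | (x, y, α) ∈ R}).Nonempty ∧
    DirectedOn (· ≤ ·) {α : L | (x, y, α) ∈ R} ∧ ScottClosed {α : L | (x, y, α) ∈ R})

/-- The `α`-cut of an `L`-fuzzy relation. -/
def lCut {S₁ S₂ L : Type*} (R : Set (S₁ × S₂ × L)) (α : L) : Set (S₁ × S₂) :=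
  {p : S₁ × S₂ | (p.1, p.2, α) ∈ R}

/-- The pseudo-inverse of an `L`-fuzzy ambiguous representation, given through its
`α`-cuts: `(R⊤)_α = ⋂_{β ≪ α} (R_β)⊤`. -/
def lpsInv {S₁ S₂ T₁ T₂ L : Type*} [PartialOrder L]
    (P₁ : S₁ → T₁ → Prop) (P₂ : S₂ → T₂ → Prop) (R : Set (S₁ × S₂ × L)) :
    Set (T₂ × T₁ × L) :=
  {p : T₂ × T₁ × L | ∀ β : L, WayBelow β p.2.2 → (p.1, p.2.1) ∈ psInv P₁ P₂ (lCut R β)}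

/-- Pseudo-invertibility condition (d) for `L`-fuzzy ambiguous representations. -/
def LPseudoInvertible {S₁ S₂ L : Type*} [PartialOrder S₁] [PartialOrder S₂] [PartialOrder L]
    (R : Set (S₁ × S₂ × L)) : Prop :=
  ∀ x y α, (x, y, α) ∈ R → ∀ y', WayBelow y' y → ∀ α', WayBelow α' α →
    ∃ x', WayBelow x' x ∧ (x', y', α') ∈ R

/-- A unital quantale structure on a complete lattice: an associative multiplication
distributing over arbitrary suprema in each variable, with the top element as two-sided
unit. -/
def IsQuantaleMul {L : Type*} [CompleteLattice L] (mul : L → L → L) : Prop :=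
  (∀ a b c, mul (mul a b) c = mul a (mul b c)) ∧
  (∀ (s : Set L) (b : L), mul (sSup s) b = ⨆ a ∈ s, mul a b) ∧
  (∀ (a : L) (s : Set L), mul a (sSup s) = ⨆ b ∈ s, mul a b) ∧
  (∀ a, mul ⊤ a = a) ∧ (∀ a, mul a ⊤ = a)

/-- Composition `R ⊛ Q` of `L`-fuzzy ambiguous representations w.r.t. a quantale
multiplication `mul` on `L`. -/
def lComp {S₁ S₂ S₃ L : Type*} [PartialOrder S₃] [CompleteLattice L] (mul : L → L → L)
    (R : Set (S₁ × S₂ × L)) (Q : Set (S₂ × S₃ × L)) : Set (S₁ × S₃ × L) :=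
  {p : S₁ × S₃ × L | ∀ z' : S₃, WayBelow z' p.2.1 → ∀ α' : L, WayBelow α' p.2.2 →
    ∃ (n : ℕ) (y : Fin n → S₂) (β γ : Fin n → L),
      (∀ i, (p.1, y i, β i) ∈ R ∧ (y i, z', γ i) ∈ Q) ∧ α' ≤ ⨆ i, mul (β i) (γ i)}

theorem WayBelow.le {α : Type*} [PartialOrder α] {x y : α} (h : WayBelow x y) : x ≤ y := by
  obtain ⟨d, hd, hxd⟩ := h {y} (Set.singleton_nonempty y) (directedOn_singleton y) y
    isLUB_singleton le_rfl
  exact hxd.trans_eq hd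

theorem WayBelow.trans_le {α : Type*} [PartialOrder α] {x y z : α} (h : WayBelow x y)
    (hyz : y ≤ z) : WayBelow x z :=
  fun D hne hD a ha hza => h D hne hD a ha (hyz.trans hza)

theorem wayBelow_bot {α : Type*} [PartialOrder α] [OrderBot α] (y : α) : WayBelow ⊥ y :=
  fun _ hne _ _ _ _ => hne.imp fun _ hd => ⟨hd, bot_le⟩

/-- The way-below relation of a continuous semilattice is interpolative. -/
theorem IsContinuousSemilattice.exists_wayBelow_between {α : Type*} [SemilatticeInf α]
    [OrderBot α] (hα : IsContinuousSemilattice α) {x y : α} (h : WayBelow x y) :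
    ∃ v, WayBelow x v ∧ WayBelow v y := by
  have hdir : DirectedOn (· ≤ ·) {w : α | ∃ v, WayBelow w v ∧ WayBelow v y} := by
    rintro w₁ ⟨v₁, hw₁, hv₁⟩ w₂ ⟨v₂, hw₂, hv₂⟩
    obtain ⟨v, hv, h₁, h₂⟩ := (hα.2 y).1 v₁ hv₁ v₂ hv₂
    obtain ⟨w, hw, hw₁w, hw₂w⟩ := (hα.2 v).1 w₁ (hw₁.trans_le h₁) w₂ (hw₂.trans_le h₂)
    exact ⟨w, ⟨v, hw, hv⟩, hw₁w, hw₂w⟩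
  have hlub : IsLUB {w : α | ∃ v, WayBelow w v ∧ WayBelow v y} y := by
    refine ⟨?_, fun b hb => ?_⟩
    · rintro w ⟨v, hw, hv⟩
      exact hw.le.trans hv.le
    · exact (hα.2 y).2.2 fun v hv => (hα.2 v).2.2 fun w hw => hb ⟨v, hw, hv⟩
  obtain ⟨w, ⟨v, hw, hv⟩, hxw⟩ :=
    h {w | ∃ v, WayBelow w v ∧ WayBelow v y} ⟨⊥, ⊥, wayBelow_bot _, wayBelow_bot _⟩
      hdir y hlub le_rfl
  refine ⟨v, fun D hne hD a ha hva => ?_, hv⟩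
  obtain ⟨d, hd, hwd⟩ := hw D hne hD a ha hva
  exact ⟨d, hd, hxw.trans hwd⟩

theorem scottClosed_compl_iff {α : Type*} [PartialOrder α] {F : Set α} :
    ScottClosed Fᶜ ↔ IsUpperSet F ∧ ∀ D : Set α, D.Nonempty → DirectedOn (· ≤ ·) D →
      ∀ a, IsLUB D a → a ∈ F → ∃ d ∈ D, d ∈ F := by
  refine and_congr isLowerSet_compl ⟨fun h D hne hD a ha haF => ?_,
    fun h D hDF hne hD a ha haF => ?_⟩
  · by_contra! hcon
    exact h D hcon hne hD a ha haF
  · obtain ⟨d, hd, hdF⟩ := h D hne hD a ha haF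
    exact hDF hd hdF

/-- In a continuous semilattice, Scott-open filters separate points. -/
theorem IsContinuousSemilattice.exists_scottOpen_filter {α : Type*} [SemilatticeInf α]
    [OrderBot α] (hα : IsContinuousSemilattice α) {x y : α} (h : ¬ x ≤ y) :
    ∃ F : Set α, ScottClosed Fᶜ ∧ IsUpperSet F ∧ (∀ a ∈ F, ∀ b ∈ F, a ⊓ b ∈ F) ∧
      x ∈ F ∧ y ∉ F := by
  obtain ⟨u, hux, huy⟩ : ∃ u, WayBelow u x ∧ ¬ u ≤ y := by
    by_contra! hcon
    exact h ((hα.2 x).2.2 hcon)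
  choose f hf using fun v : {v : α // WayBelow u v} => hα.exists_wayBelow_between v.2
  let c : ℕ → {v : α // WayBelow u v} := fun n => (fun v => ⟨f v, (hf v).1⟩)^[n] ⟨x, hux⟩
  have hc : ∀ n, WayBelow (c (n + 1)).1 (c n).1 := fun n => by
    simp only [c, Function.iterate_succ_apply']
    exact (hf _).2
  have hanti : Antitone fun n => (c n).1 := antitone_nat_of_succ_le fun n => (hc n).le
  have hup : IsUpperSet {z : α | ∃ n, (c n).1 ≤ z} :=
    fun a b hab ⟨n, hn⟩ => ⟨n, hn.trans hab⟩
  refine ⟨{z | ∃ n, (c n).1 ≤ z}, scottClosed_compl_iff.2 ⟨hup, ?_⟩, hup, ?_, ⟨0, le_rfl⟩, ?_⟩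
  · rintro D hne hD a ha ⟨n, hn⟩
    obtain ⟨d, hd, hnd⟩ := hc n D hne hD a ha hn
    exact ⟨d, hd, n + 1, hnd⟩
  · rintro a ⟨m, hm⟩ b ⟨n, hn⟩
    exact ⟨max m n, le_inf ((hanti (le_max_left m n)).trans hm)
      ((hanti (le_max_right m n)).trans hn)⟩
  · rintro ⟨n, hn⟩
    exact huy ((c n).2.le.trans hn)

/-- If `i : S → S'^∧` is an order isomorphism onto the poset of Scott-open
filters of `S'` other than `S'` itself (ordered by inclusion), then `P(x,y) = 1 ↔ y ∈ i(x)`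
defines a separating compatibility, and it is the unique separating compatibility `P` with
`i(x) = {y | P(x,y) = 1}` for all `x`. -/
theorem stmt2 {S S' : Type*} [SemilatticeInf S] [OrderBot S] [SemilatticeInf S'] [OrderBot S']
    (hS : IsContinuousSemilattice S) (hS' : IsContinuousSemilattice S')
    (i : S → Set S')
    (hi_mem : ∀ x : S, ScottClosed (i x)ᶜ ∧ IsUpperSet (i x) ∧
      (∀ a ∈ i x, ∀ b ∈ i x, a ⊓ b ∈ i x) ∧ i x ≠ Set.univ)
    (hi_ord : ∀ x₁ x₂ : S, x₁ ≤ x₂ ↔ i x₁ ⊆ i x₂)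
    (hi_surj : ∀ F : Set S', ScottClosed Fᶜ → IsUpperSet F →
      (∀ a ∈ F, ∀ b ∈ F, a ⊓ b ∈ F) → F ≠ Set.univ → ∃ x : S, i x = F) :
    IsSeparatingCompatibility (fun (x : S) (y : S') => y ∈ i x) ∧
    (∀ P : S → S' → Prop, IsSeparatingCompatibility P →
      (∀ x : S, {y : S' | P x y} = i x) → P = fun (x : S) (y : S') => y ∈ i x) := by
  have hbot : ∀ x, ⊥ ∉ i x := fun x hx =>
    (hi_mem x).2.2.2 (Set.eq_univ_of_forall fun y => (hi_mem x).2.1 bot_le hx)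
  have hne_univ : ∀ F : Set S', ⊥ ∉ F → F ≠ Set.univ := fun F hF h => hF (h ▸ Set.mem_univ _)
  have hmono : ∀ {x₁ x₂}, x₁ ≤ x₂ → i x₁ ⊆ i x₂ := fun {x₁ x₂} h => (hi_ord x₁ x₂).1 h
  have hopen := fun x => (scottClosed_compl_iff.1 (hi_mem x).1).2
  refine ⟨⟨⟨fun x₁ x₂ y => ⟨fun h => ⟨hmono inf_le_left h, hmono inf_le_right h⟩, ?_⟩,
    fun x y₁ y₂ => ⟨fun h => ⟨(hi_mem x).2.1 inf_le_left h, (hi_mem x).2.1 inf_le_right h⟩,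
      fun h => (hi_mem x).2.2.1 _ h.1 _ h.2⟩, fun y hy => ?_, hbot, ?_⟩, ?_, ?_⟩, ?_⟩
  · have hup : IsUpperSet (i x₁ ∩ i x₂) := (hi_mem x₁).2.1.inter (hi_mem x₂).2.1
    obtain ⟨z, hz⟩ := hi_surj (i x₁ ∩ i x₂)
      (scottClosed_compl_iff.2 ⟨hup, fun D hne hD a ha haF => by
        obtain ⟨d₁, hd₁, h₁⟩ := hopen x₁ D hne hD a ha haF.1
        obtain ⟨d₂, hd₂, h₂⟩ := hopen x₂ D hne hD a ha haF.2
        obtain ⟨d, hd, hd₁d, hd₂d⟩ := hD d₁ hd₁ d₂ hd₂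
        exact ⟨d, hd, (hi_mem x₁).2.1 hd₁d h₁, (hi_mem x₂).2.1 hd₂d h₂⟩⟩) hup
      (fun a ha b hb => ⟨(hi_mem x₁).2.2.1 a ha.1 b hb.1, (hi_mem x₂).2.2.1 a ha.2 b hb.2⟩)
      (hne_univ _ fun h => hbot x₁ h.1)
    have hzle : z ≤ x₁ ⊓ x₂ := le_inf ((hi_ord _ _).2 (hz ▸ Set.inter_subset_left))
      ((hi_ord _ _).2 (hz ▸ Set.inter_subset_right))
    exact fun h => hmono hzle (hz ▸ h)
  · obtain ⟨z, hz⟩ := hi_surj ∅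
      (scottClosed_compl_iff.2 ⟨isUpperSet_empty, fun _ _ _ _ _ h => h.elim⟩) isUpperSet_empty
      (fun _ h => h.elim) (hne_univ _ id)
    exact (hz ▸ hmono bot_le hy : y ∈ (∅ : Set S'))
  · refine fun D hne hD a ha => ⟨fun h => ?_, fun ⟨p, hp, h⟩ =>
      (hi_mem a.1).2.1 (ha.1 hp).2 (hmono (ha.1 hp).1 h)⟩
    obtain ⟨ha₁, ha₂⟩ := isLUB_prod.1 ha
    have hup : IsUpperSet (⋃ p ∈ D, i p.1) := isUpperSet_iUnion₂ fun p _ => (hi_mem p.1).2.1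
    obtain ⟨z, hz⟩ := hi_surj (⋃ p ∈ D, i p.1)
      (scottClosed_compl_iff.2 ⟨hup, fun E hne hE b hb hbF => by
        obtain ⟨p, hp, hbp⟩ := Set.mem_iUnion₂.1 hbF
        obtain ⟨e, he, hep⟩ := hopen p.1 E hne hE b hb hbp
        exact ⟨e, he, Set.mem_iUnion₂.2 ⟨p, hp, hep⟩⟩⟩) hup
      (fun b hb c hc => by
        obtain ⟨p, hp, hbp⟩ := Set.mem_iUnion₂.1 hb
        obtain ⟨q, hq, hcq⟩ := Set.mem_iUnion₂.1 hc
        obtain ⟨r, hr, hpr, hqr⟩ := hD p hp q hq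
        exact Set.mem_iUnion₂.2
          ⟨r, hr, (hi_mem r.1).2.2.1 b (hmono hpr.1 hbp) c (hmono hqr.1 hcq)⟩)
      (hne_univ _ fun h => by
        obtain ⟨p, _, hp⟩ := Set.mem_iUnion₂.1 h
        exact hbot p.1 hp)
    have haz : a.1 ≤ z := ha₁.2 (Set.forall_mem_image.2 fun p hp =>
      (hi_ord _ _).2 (hz ▸ Set.subset_biUnion_of_mem (u := fun p : S × S' => i p.1) hp))
    obtain ⟨p, hp, hap⟩ := Set.mem_iUnion₂.1 (hz ▸ hmono haz h)
    obtain ⟨_, ⟨q, hq, rfl⟩, hqp⟩ := hopen p.1 (Set.image Prod.snd D) (hne.image _)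
      (directedOn_image.2 (hD.mono fun _ _ h => h.2)) a.2 ha₂ hap
    obtain ⟨r, hr, hpr, hqr⟩ := hD p hp q hq
    exact ⟨r, hr, hmono hpr.1 ((hi_mem p.1).2.1 hqr.2 hqp)⟩
  · exact fun x₁ x₂ h => le_antisymm ((hi_ord _ _).2 fun y => (h y).1)
      ((hi_ord _ _).2 fun y => (h y).2)
  · have hle : ∀ y₁ y₂, (∀ x, y₁ ∈ i x → y₂ ∈ i x) → y₁ ≤ y₂ := fun y₁ y₂ h => by
      by_contra hcon
      obtain ⟨F, hF, hup, hinf, h₁, h₂⟩ := hS'.exists_scottOpen_filter hcon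
      obtain ⟨x, rfl⟩ := hi_surj F hF hup hinf fun h => h₂ (h ▸ Set.mem_univ _)
      exact h₂ (h x h₁)
    exact fun y₁ y₂ h => le_antisymm (hle _ _ fun x => (h x).1) (hle _ _ fun x => (h x).2)
  · exact fun P _ hP => funext fun x => hP x
end

section
/- Let R ⊆ S₁ × S₂ be an ambiguous representation of S₁ in S₂, and fix separating compatibilities P₁ : S₁ × Ŝ₁ → {0,1} and P₂ : S₂ × Ŝ₂ → {0,1}. Then the pseudo-inverse R⊤ ⊆ Ŝ₂ × Ŝ₁ is an ambiguous representation of Ŝ₂ in Ŝ₁. -/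
/-- A compatibility is monotone in its second variable. -/
theorem IsCompatibility.mono_right {S S' : Type*} [SemilatticeInf S] [OrderBot S]
    [SemilatticeInf S'] [OrderBot S'] {P : S → S' → Prop} (hP : IsCompatibility P)
    {x : S} {y z : S'} (hyz : y ≤ z) (h : P x y) : P x z :=
  ((hP.2.1 x y z).1 (by rwa [inf_eq_left.2 hyz])).2

/-- A compatibility is Scott continuous in its second variable. -/
theorem IsCompatibility.exists_mem_of_isLUB {S S' : Type*} [SemilatticeInf S] [OrderBot S]
    [SemilatticeInf S'] [OrderBot S'] {P : S → S' → Prop} (hP : IsCompatibility P)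
    {D : Set S'} (hne : D.Nonempty) (hD : DirectedOn (· ≤ ·) D) {a : S'} (ha : IsLUB D a)
    {x : S} (h : P x a) : ∃ d ∈ D, P x d := by
  have hdir : DirectedOn (· ≤ ·) (({x} : Set S) ×ˢ D) := by
    rintro ⟨_, y⟩ ⟨rfl, hy⟩ ⟨_, z⟩ ⟨rfl, hz⟩
    obtain ⟨w, hw, hyw, hzw⟩ := hD y hy z hz
    exact ⟨(_, w), ⟨rfl, hw⟩, ⟨le_rfl, hyw⟩, ⟨le_rfl, hzw⟩⟩
  have hlub : IsLUB (({x} : Set S) ×ˢ D) (x, a) :=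
    isLUB_singleton.prod (Set.singleton_nonempty x) hne ha
  obtain ⟨⟨_, d⟩, ⟨rfl, hd⟩, hPd⟩ :=
    (hP.2.2.2.2 _ ((Set.singleton_nonempty x).prod hne) hdir (x, a) hlub).1 h
  exact ⟨d, hd, hPd⟩

/-- The pseudo-inverse `R⊤ ⊆ Ŝ₂ × Ŝ₁` of an ambiguous representation
`R ⊆ S₁ × S₂` (w.r.t. separating compatibilities `P₁`, `P₂`) is an ambiguous
representation of `Ŝ₂` in `Ŝ₁`. -/
theorem stmt5 {S₁ S₂ T₁ T₂ : Type*}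
    [SemilatticeInf S₁] [OrderBot S₁] [SemilatticeInf S₂] [OrderBot S₂]
    [SemilatticeInf T₁] [OrderBot T₁] [SemilatticeInf T₂] [OrderBot T₂]
    (h₁ : IsContinuousSemilattice S₁) (h₂ : IsContinuousSemilattice S₂)
    (ht₁ : IsContinuousSemilattice T₁) (ht₂ : IsContinuousSemilattice T₂)
    (P₁ : S₁ → T₁ → Prop) (P₂ : S₂ → T₂ → Prop)
    (hP₁ : IsSeparatingCompatibility P₁) (hP₂ : IsSeparatingCompatibility P₂)
    (R : Set (S₁ × S₂)) (hR : AmbRep R) :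
    AmbRep (psInv P₁ P₂ R) := by
  refine ⟨fun t => ⟨⟨⊥, fun x hx => (hP₁.1.2.2.2.1 x hx).elim⟩, ?_, ?_⟩, ?_⟩
  · exact fun _ _ hle hmem x hx => hmem x (hP₁.1.mono_right hle hx)
  · intro D hDsub hne hD a ha x hx
    obtain ⟨d, hd, hPd⟩ := hP₁.1.exists_mem_of_isLUB hne hD ha hx
    exact hDsub hd x hPd
  · intro t _ _ hle hmem x hx
    obtain ⟨y, hy, hPy⟩ := hmem x hx
    exact ⟨y, hy, hP₂.1.mono_right hle hPy⟩
end

section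
/- Let R ⊆ S₁ × S₂ and Q ⊆ S₂ × S₃ be ambiguous representations of continuous semilattices with zero. Then their composition R;Q is an ambiguous representation of S₁ in S₃, and for every x ∈ S₁ the cut x(R;Q) equals the Scott closure of the set xRQ = {z ∈ S₃ : there is y ∈ S₂ with (x,y) ∈ R and (y,z) ∈ Q}. -/
theorem WayBelow.mono {α : Type*} [PartialOrder α] {x x' y y' : α} (h : WayBelow x y)
    (hx : x' ≤ x) (hy : y ≤ y') : WayBelow x' y' := fun D hne hD a ha hya =>
  let ⟨d, hd, hxd⟩ := h D hne hD a ha (hy.trans hya)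
  ⟨d, hd, hx.trans hxd⟩

/-- The interpolation property of the way-below relation. -/
theorem IsContinuousSemilattice.exists_wayBelow_wayBelow {α : Type*} [SemilatticeInf α]
    [OrderBot α] (h : IsContinuousSemilattice α) {x y : α} (hxy : WayBelow x y) :
    ∃ w, WayBelow x w ∧ WayBelow w y := by
  have hdir : DirectedOn (· ≤ ·) {u : α | ∃ w, WayBelow u w ∧ WayBelow w y} := by
    rintro u₁ ⟨w₁, hu₁, hw₁⟩ u₂ ⟨w₂, hu₂, hw₂⟩
    obtain ⟨w, hw, hw₁w, hw₂w⟩ := (h.2 y).1 w₁ hw₁ w₂ hw₂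
    obtain ⟨u, hu, hu₁u, hu₂u⟩ :=
      (h.2 w).1 u₁ (hu₁.mono le_rfl hw₁w) u₂ (hu₂.mono le_rfl hw₂w)
    exact ⟨u, ⟨w, hu, hw⟩, hu₁u, hu₂u⟩
  have hlub : IsLUB {u : α | ∃ w, WayBelow u w ∧ WayBelow w y} y := by
    refine ⟨?_, fun b hb => (h.2 y).2.2 fun w hw => (h.2 w).2.2 fun u hu => hb ⟨w, hu, hw⟩⟩
    rintro u ⟨w, hu, hw⟩
    exact hu.le.trans hw.le
  obtain ⟨u, ⟨w, hu, hw⟩, hxu⟩ :=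
    hxy {u : α | ∃ w, WayBelow u w ∧ WayBelow w y}
      ⟨⊥, ⊥, wayBelow_bot _, wayBelow_bot _⟩ hdir y hlub le_rfl
  exact ⟨w, hu.mono hxu le_rfl, hw⟩

theorem IsContinuousSemilattice.scottClosed_setOf_wayBelow_subset {α : Type*}
    [SemilatticeInf α] [OrderBot α] (h : IsContinuousSemilattice α) (A : Set α) :
    ScottClosed {z : α | ∀ z', WayBelow z' z → z' ∈ A} := by
  refine ⟨fun z w hwz hz z' hz' => hz z' (hz'.mono le_rfl hwz), ?_⟩
  intro D hDA hne hD a ha z' hz'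
  obtain ⟨w, hz'w, hwa⟩ := h.exists_wayBelow_wayBelow hz'
  obtain ⟨d, hd, hwd⟩ := hwa D hne hD a ha le_rfl
  exact hDA hd z' (hz'w.mono le_rfl hwd)

/-- In a continuous semilattice, the Scott closure of a lower set consists of the elements
all of whose way-below approximants lie in the set. -/
theorem IsContinuousSemilattice.scottClosure_eq {α : Type*} [SemilatticeInf α] [OrderBot α]
    (h : IsContinuousSemilattice α) {A : Set α} (hA : IsLowerSet A) :
    scottClosure A = {z : α | ∀ z', WayBelow z' z → z' ∈ A} := by
  refine Set.Subset.antisymm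
    (Set.sInter_subset_of_mem ⟨h.scottClosed_setOf_wayBelow_subset A,
      fun z hz z' hz' => hA hz'.le hz⟩) ?_
  rintro z hz C ⟨hC, hAC⟩
  exact hC.2 _ (fun z' hz' => hAC (hz z' hz')) ⟨⊥, wayBelow_bot z⟩ (h.2 z).1 z (h.2 z).2

/-- The composition `R;Q` of ambiguous representations is an ambiguous
representation, and `x(R;Q)` is the Scott closure of
`xRQ = {z : ∃ y, (x,y) ∈ R ∧ (y,z) ∈ Q}` for every `x`. -/
theorem stmt9 {S₁ S₂ S₃ : Type*}
    [SemilatticeInf S₁] [OrderBot S₁] [SemilatticeInf S₂] [OrderBot S₂]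
    [SemilatticeInf S₃] [OrderBot S₃]
    (h₁ : IsContinuousSemilattice S₁) (h₂ : IsContinuousSemilattice S₂)
    (h₃ : IsContinuousSemilattice S₃)
    (R : Set (S₁ × S₂)) (Q : Set (S₂ × S₃)) (hR : AmbRep R) (hQ : AmbRep Q) :
    AmbRep (ambComp R Q) ∧
    ∀ x : S₁, {z : S₃ | (x, z) ∈ ambComp R Q} =
      scottClosure {z : S₃ | ∃ y : S₂, (x, y) ∈ R ∧ (y, z) ∈ Q} := by
  have hlow : ∀ x, IsLowerSet {z : S₃ | ∃ y : S₂, (x, y) ∈ R ∧ (y, z) ∈ Q} := by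
    rintro x z w hwz ⟨y, hy, hz⟩
    exact ⟨y, hy, (hQ.1 y).2.1 hwz hz⟩
  refine ⟨⟨fun x => ⟨?_, h₃.scottClosed_setOf_wayBelow_subset
      {z | ∃ y : S₂, (x, y) ∈ R ∧ (y, z) ∈ Q}⟩, ?_⟩,
    fun x => (h₃.scottClosure_eq (hlow x)).symm⟩
  · obtain ⟨y, hy⟩ := (hR.1 x).1
    obtain ⟨z, hz⟩ := (hQ.1 y).1
    exact ⟨z, fun z' hz' => hlow x hz'.le ⟨y, hy, hz⟩⟩
  · intro z x x' hxx' hx z' hz'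
    obtain ⟨y, hy, hz⟩ := hx z' hz'
    exact ⟨y, hR.2 y hxx' hy, hz⟩
end

section
/- Let R ⊆ S₁ × S₂ and Q ⊆ S₂ × S₃ be ambiguous representations, and fix separating compatibilities P₁ : S₁ × Ŝ₁ → {0,1}, P₂ : S₂ × Ŝ₂ → {0,1}, P₃ : S₃ × Ŝ₃ → {0,1}. Then Q⊤;R⊤ ⊆ (R;Q)⊤. -/
/-- Scott continuity of a compatibility in its second variable, along the approximating set. -/
theorem IsCompatibility.exists_wayBelow {S S' : Type*} [SemilatticeInf S] [OrderBot S]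
    [SemilatticeInf S'] [OrderBot S'] {P : S → S' → Prop} (hP : IsCompatibility P)
    (hS' : IsContinuousSemilattice S') {x : S} {y : S'} (h : P x y) :
    ∃ y', WayBelow y' y ∧ P x y' := by
  obtain ⟨hdir, hlub⟩ := hS'.2 y
  have hbot : WayBelow ⊥ y := fun D ⟨d, hd⟩ _ _ _ _ => ⟨d, hd, bot_le⟩
  have mem : ∀ b, WayBelow b y → (x, b) ∈ ({x} : Set S) ×ˢ {y' | WayBelow y' y} :=
    fun _ hb => ⟨rfl, hb⟩
  have hD : DirectedOn (· ≤ ·) (({x} : Set S) ×ˢ {y' | WayBelow y' y}) := by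
    rintro ⟨a, b⟩ ⟨rfl, hb⟩ ⟨a', c⟩ ⟨rfl, hc⟩
    obtain ⟨d, hd, hbd, hcd⟩ := hdir b hb c hc
    exact ⟨(a', d), ⟨rfl, hd⟩, ⟨le_rfl, hbd⟩, ⟨le_rfl, hcd⟩⟩
  have hL : IsLUB (({x} : Set S) ×ˢ {y' | WayBelow y' y}) (x, y) := by
    refine ⟨?_, fun u hu => ⟨(hu (mem ⊥ hbot)).1, hlub.2 fun b hb => ?_⟩⟩
    · rintro ⟨a, b⟩ ⟨rfl, hb⟩
      exact ⟨le_rfl, hlub.1 hb⟩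
    · exact (hu (mem b hb)).2
  obtain ⟨⟨a, b⟩, ⟨rfl, hb⟩, hab⟩ :=
    (hP.2.2.2.2 _ ⟨_, mem ⊥ hbot⟩ hD (x, y) hL).1 h
  exact ⟨b, hb, hab⟩

/-- `Q⊤ ; R⊤ ⊆ (R;Q)⊤`. -/
theorem stmt10 {S₁ S₂ S₃ T₁ T₂ T₃ : Type*}
    [SemilatticeInf S₁] [OrderBot S₁] [SemilatticeInf S₂] [OrderBot S₂]
    [SemilatticeInf S₃] [OrderBot S₃]
    [SemilatticeInf T₁] [OrderBot T₁] [SemilatticeInf T₂] [OrderBot T₂]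
    [SemilatticeInf T₃] [OrderBot T₃]
    (h₁ : IsContinuousSemilattice S₁) (h₂ : IsContinuousSemilattice S₂)
    (h₃ : IsContinuousSemilattice S₃)
    (ht₁ : IsContinuousSemilattice T₁) (ht₂ : IsContinuousSemilattice T₂)
    (ht₃ : IsContinuousSemilattice T₃)
    (P₁ : S₁ → T₁ → Prop) (P₂ : S₂ → T₂ → Prop) (P₃ : S₃ → T₃ → Prop)
    (hP₁ : IsSeparatingCompatibility P₁) (hP₂ : IsSeparatingCompatibility P₂)
    (hP₃ : IsSeparatingCompatibility P₃)
    (R : Set (S₁ × S₂)) (Q : Set (S₂ × S₃)) (hR : AmbRep R) (hQ : AmbRep Q) :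
    ambComp (psInv P₂ P₃ Q) (psInv P₁ P₂ R) ⊆ psInv P₁ P₃ (ambComp R Q) := by
  rintro ⟨z, x⟩ hzx s hs
  obtain ⟨x', hx', hsx'⟩ := hP₁.1.exists_wayBelow ht₁ hs
  obtain ⟨y, hzy, hyx'⟩ := hzx x' hx'
  obtain ⟨t, hst, hty⟩ := hyx' s hsx'
  obtain ⟨u, htu, huz⟩ := hzy t hty
  exact ⟨u, fun u' hu' => ⟨t, hst, (hQ.1 t).2.1 hu'.le htu⟩, huz⟩
end

section
/- For a continuous semilattice S with zero, the relation E_S = {(x,y) ∈ S × S : y ≤ x} is a pseudo-invertible ambiguous representation of S in S, and it is neutral for composition: for every pseudo-invertible ambiguous representation R ⊆ S₁ × S₂ one has E_{S₁};R = R and R;E_{S₂} = R. -/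
theorem ScottClosed.mem_of_forall_wayBelow {α : Type*} [SemilatticeInf α] [OrderBot α]
    (hα : IsContinuousSemilattice α) {A : Set α} (hA : ScottClosed A) {y : α}
    (h : ∀ x, WayBelow x y → x ∈ A) : y ∈ A :=
  hA.2 {x | WayBelow x y} h ⟨⊥, wayBelow_bot y⟩ (hα.2 y).1 y (hα.2 y).2

theorem ambRep_ge {α : Type*} [PartialOrder α] : AmbRep {p : α × α | p.2 ≤ p.1} :=
  ⟨fun x => ⟨⟨x, le_refl x⟩, fun _ _ hba ha => le_trans hba ha,
    fun _ hD _ _ _ ha => ha.2 hD⟩, fun _ _ _ hab ha => le_trans ha hab⟩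

theorem pseudoInvertible_ge {α : Type*} [PartialOrder α] :
    PseudoInvertible {p : α × α | p.2 ≤ p.1} :=
  fun _ _ hyx y' hy' => ⟨y', hy'.trans_le hyx, le_refl y'⟩

theorem ambComp_ge_left {S₁ S₂ : Type*} [PartialOrder S₁] [SemilatticeInf S₂] [OrderBot S₂]
    (h₂ : IsContinuousSemilattice S₂) {R : Set (S₁ × S₂)} (hR : AmbRep R) :
    ambComp {p : S₁ × S₁ | p.2 ≤ p.1} R = R := by
  ext ⟨x, z⟩
  refine ⟨fun h => (hR.1 x).2.mem_of_forall_wayBelow h₂ fun z' hz' => ?_,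
    fun h z' hz' => ⟨x, le_refl x, (hR.1 x).2.1 hz'.le h⟩⟩
  obtain ⟨y, hyx, hy⟩ := h z' hz'
  exact hR.2 z' hyx hy

theorem ambComp_ge_right {S₁ S₂ : Type*} [PartialOrder S₁] [SemilatticeInf S₂] [OrderBot S₂]
    (h₂ : IsContinuousSemilattice S₂) {R : Set (S₁ × S₂)} (hR : AmbRep R) :
    ambComp R {p : S₂ × S₂ | p.2 ≤ p.1} = R := by
  ext ⟨x, z⟩
  refine ⟨fun h => (hR.1 x).2.mem_of_forall_wayBelow h₂ fun z' hz' => ?_,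
    fun h z' hz' => ⟨z, h, hz'.le⟩⟩
  obtain ⟨y, hy, hzy⟩ := h z' hz'
  exact (hR.1 x).2.1 hzy hy

/-- For a continuous semilattice `S` with zero, `E_S = {(x,y) : y ≤ x}` is
a pseudo-invertible ambiguous representation, and it is neutral for composition:
`E_{S₁};R = R` and `R;E_{S₂} = R` for every pseudo-invertible ambiguous
representation `R ⊆ S₁ × S₂`. -/
theorem stmt13 {S S₁ S₂ : Type*}
    [SemilatticeInf S] [OrderBot S]
    [SemilatticeInf S₁] [OrderBot S₁] [SemilatticeInf S₂] [OrderBot S₂]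
    (hS : IsContinuousSemilattice S)
    (h₁ : IsContinuousSemilattice S₁) (h₂ : IsContinuousSemilattice S₂)
    (R : Set (S₁ × S₂)) (hR : AmbRep R) (hRpi : PseudoInvertible R) :
    (AmbRep {p : S × S | p.2 ≤ p.1} ∧ PseudoInvertible {p : S × S | p.2 ≤ p.1}) ∧
    ambComp {p : S₁ × S₁ | p.2 ≤ p.1} R = R ∧
    ambComp R {p : S₂ × S₂ | p.2 ≤ p.1} = R := by
  exact ⟨⟨ambRep_ge, pseudoInvertible_ge⟩, ambComp_ge_left h₂ hR, ambComp_ge_right h₂ hR⟩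
end
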